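/- arXiv:0801.0080 — 4 statements merged into one kernel-verified Lean document; each statement's English description precedes it below -/
import Mathlib

section
/- Let F be a field and let A₁,…,Aₙ be finite subsets of F with |Aᵢ| ≥ i for i = 1,…,n. Let f(x₁,…,xₙ) = x₁^k + ⋯ + xₙ^k + g(x₁,…,xₙ) ∈ F[x₁,…,xₙ] where deg g < k ≤ n. Set qᵢ = min{ ⌊(|A_j| − j)/k⌋ : i ≤ j ≤ n, j ≡ i (mod k) } for i = 1,…,n. Then |{ f(x₁,…,xₙ) : x₁ ∈ A₁,…,xₙ ∈ Aₙ, and xᵢ ≠ x_j whenever i ≠ j }| ≥ min{ p(F), q₁ + ⋯ + qₙ + 1 }. -/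
open MvPolynomial Finset

/-!
Write `S` for the set of values and `V` for the Vandermonde polynomial. The product
`V * ∏ c ∈ S, (f - c)` vanishes on `A₁ × ⋯ × Aₙ`, so by the Combinatorial Nullstellensatz it has no
monomial of top degree with nonzero coefficient whose exponents satisfy `dᵢ < |Aᵢ|`. In top degree
it agrees with `V * (∑ xᵢ ^ k) ^ |S|`. If `|S| ≤ ∑ qᵢ`, shrink the `qᵢ` to have sum `|S|`, keeping
them monotone along each residue class modulo `k`, and take `dᵢ = k qᵢ + i - 1`. Up to the factor
`∏ ⌊dᵢ / k⌋!`, the coefficient is then `|S|!` times a determinant which splits along the residue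
classes into Vandermonde determinants in the numbers `⌊dᵢ / k⌋`. As these numbers increase along
each class, these determinants divide the corresponding factorials, so the coefficient divides
`|S|!`. This is impossible if `|S| < p(F)`, because then `|S|!` is nonzero in `F`.
-/

section PowerSum

variable {σ R : Type*} [Fintype σ]

lemma psum_eq_expand_sum_X [CommSemiring R] (k : ℕ) :
    psum σ R k = expand k (∑ i, X i) := by
  simp [psum]

lemma map_psum {S : Type*} [CommSemiring R] [CommSemiring S] (φ : R →+* S) (k : ℕ) :
    map φ (psum σ R k) = psum σ S k := by
  simp [psum]

lemma totalDegree_psum_le [CommSemiring R] (k : ℕ) :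
    (psum σ R k).totalDegree ≤ k :=
  totalDegree_finsetSum_le fun i _ => by
    rw [X_pow_eq_monomial]
    exact (totalDegree_monomial_le _ _).trans_eq (Finsupp.sum_single_index rfl)

lemma coeff_psum_pow_of_not_dvd [CommSemiring R] {k : ℕ} (N : ℕ) {d : σ →₀ ℕ} {i : σ}
    (h : ¬ k ∣ d i) : coeff d (psum σ R k ^ N) = 0 := by
  rw [psum_eq_expand_sum_X, ← map_pow]
  exact coeff_expand_of_not_dvd _ h

lemma coeff_psum_pow_mul_prod_factorial [CommSemiring R] {k : ℕ} (hk : k ≠ 0) (b : σ →₀ ℕ) :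
    coeff (k • b) (psum σ R k ^ b.degree) * ∏ i, ((b i).factorial : R) = b.degree.factorial := by
  have hsum : (b.sum fun _ m => m) = b.degree := rfl
  rw [psum_eq_expand_sum_X, ← map_pow, coeff_expand_smul k hk, coeff_sum_X_pow_of_fintype,
    if_pos hsum, ← Finsupp.multinomial_of_support_subset (subset_univ _), mul_comm,
    Finsupp.degree_eq_sum, ← Nat.multinomial_spec]
  push_cast
  rfl

/-- For `k ≠ 0`, the quotient of `⌊a / k⌋!` by `c!` if `a = b + k * c`, and zero if there is no such
`c`. Up to normalization by factorials, a power of `psum` multiplied by a monomial has products of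
these numbers as its coefficients. -/
def residueDescFactorial (k a b : ℕ) : ℕ :=
  if a % k = b % k then (a / k).descFactorial (b / k) else 0

lemma residueDescFactorial_eq_zero {k a b : ℕ} (h : ∀ c, a ≠ b + k * c) :
    residueDescFactorial k a b = 0 := by
  rw [residueDescFactorial, ite_eq_right_iff, Nat.descFactorial_eq_zero_iff_lt]
  intro hmod
  by_contra! hle
  apply h (a / k - b / k)
  have ha := Nat.div_add_mod a k
  have hb := Nat.div_add_mod b k
  have hmul := Nat.mul_le_mul_left k hle
  rw [Nat.mul_sub]
  omega

lemma factorial_mul_residueDescFactorial {k : ℕ} (hk : k ≠ 0) (b c : ℕ) :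
    c.factorial * residueDescFactorial k (b + k * c) b = ((b + k * c) / k).factorial := by
  have hdiv : (b + k * c) / k = b / k + c := Nat.add_mul_div_left b c (Nat.pos_of_ne_zero hk)
  rw [residueDescFactorial, if_pos (Nat.add_mul_mod_self_left b k c), hdiv]
  simpa using Nat.factorial_mul_descFactorial (Nat.le_add_right (b / k) c)

lemma coeff_monomial_mul_psum_pow_mul_prod_factorial [CommSemiring R] {k N : ℕ} (hk : k ≠ 0)
    {d e : σ →₀ ℕ} (hde : d.degree = e.degree + k * N) :
    coeff d (monomial e 1 * psum σ R k ^ N) * ∏ i, ((d i / k).factorial : R) =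
      N.factorial * ∏ i, (residueDescFactorial k (d i) (e i) : R) := by
  by_cases h : ∀ i, ∃ c, d i = e i + k * c
  · choose c hc using h
    obtain ⟨b, rfl⟩ : ∃ b : σ →₀ ℕ, d = e + k • b :=
      ⟨Finsupp.equivFunOnFinite.symm c, Finsupp.ext hc⟩
    obtain rfl : b.degree = N := by simpa [hk] using hde
    rw [coeff_monomial_mul, one_mul, ← coeff_psum_pow_mul_prod_factorial hk b, mul_assoc,
      ← prod_mul_distrib]
    congr 1
    refine prod_congr rfl fun i _ => ?_
    rw [← Nat.cast_mul]
    exact congrArg Nat.cast (factorial_mul_residueDescFactorial hk (e i) (b i)).symm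
  · push Not at h
    obtain ⟨i, hi⟩ := h
    have hcoeff : coeff d (monomial e 1 * psum σ R k ^ N) = 0 := by
      rw [coeff_monomial_mul', ite_eq_right_iff]
      intro hed
      rw [coeff_psum_pow_of_not_dvd (i := i), mul_zero]
      rintro ⟨c, hc⟩
      exact hi c (by rw [← hc, Finsupp.tsub_apply, Nat.add_sub_cancel' (hed i)])
    have hfactor : (residueDescFactorial k (d i) (e i) : R) = 0 := by
      rw [residueDescFactorial_eq_zero hi, Nat.cast_zero]
    rw [hcoeff, zero_mul, prod_eq_zero (mem_univ i) hfactor, mul_zero]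

end PowerSum

section Vandermonde

/-- The Vandermonde polynomial `∏ i < j, (X j - X i)`, as a determinant. Over a domain, it is
nonzero exactly at the tuples with pairwise distinct coordinates. -/
noncomputable def vandermondePolynomial (n : ℕ) (R : Type*) [CommRing R] : MvPolynomial (Fin n) R :=
  (Matrix.vandermonde X).det

/-- The matrix of the numbers `residueDescFactorial k (d i) j`. Its determinant governs the
coefficient of `∏ i, X i ^ d i` in the product of the Vandermonde polynomial and a power of
`psum (Fin n) R k`. -/
def residueDescFactorialMatrix {n : ℕ} (R : Type*) [NatCast R] (k : ℕ) (d : Fin n → ℕ) :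
    Matrix (Fin n) (Fin n) R :=
  Matrix.of fun i j => (residueDescFactorial k (d i) j : R)

variable {n : ℕ} {R : Type*} [CommRing R]

lemma vandermondePolynomial_eq_sum_monomial :
    vandermondePolynomial n R = ∑ τ : Equiv.Perm (Fin n), Equiv.Perm.sign τ •
      monomial (Finsupp.equivFunOnFinite.symm fun i => (τ i : ℕ)) (1 : R) := by
  rw [vandermondePolynomial, ← Matrix.det_transpose, Matrix.det_apply]
  refine sum_congr rfl fun τ _ => ?_
  rw [monomial_eq, C_1, one_mul, Finsupp.prod_fintype _ _ fun i => pow_zero _]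
  rfl

lemma degree_equivFunOnFinite_symm_perm (τ : Equiv.Perm (Fin n)) :
    (Finsupp.equivFunOnFinite.symm fun i => (τ i : ℕ)).degree = ∑ i : Fin n, (i : ℕ) :=
  (Finsupp.degree_eq_sum _).trans (Equiv.sum_comp τ fun i : Fin n => (i : ℕ))

lemma totalDegree_vandermondePolynomial_le :
    (vandermondePolynomial n R).totalDegree ≤ ∑ i : Fin n, (i : ℕ) := by
  rw [vandermondePolynomial_eq_sum_monomial]
  refine totalDegree_finsetSum_le fun τ _ => ?_
  rw [Units.smul_def, ← degree_equivFunOnFinite_symm_perm τ]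
  exact (totalDegree_smul_le _ _).trans (totalDegree_monomial_le _ _)

lemma mapMatrix_vandermonde {S : Type*} [CommRing S] (φ : R →+* S) (v : Fin n → R) :
    φ.mapMatrix (Matrix.vandermonde v) = Matrix.vandermonde (φ ∘ v) := by
  ext i j
  simp [Matrix.vandermonde_apply]

lemma map_vandermondePolynomial {S : Type*} [CommRing S] (φ : R →+* S) :
    map φ (vandermondePolynomial n R) = vandermondePolynomial n S := by
  rw [vandermondePolynomial, RingHom.map_det, mapMatrix_vandermonde, vandermondePolynomial]
  congr 2
  exact funext fun i => map_X φ i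

lemma eval_vandermondePolynomial_ne_zero_iff [IsDomain R] {x : Fin n → R} :
    eval x (vandermondePolynomial n R) ≠ 0 ↔ Function.Injective x := by
  have heval : eval x ∘ X = x := funext fun i => eval_X i
  rw [vandermondePolynomial, RingHom.map_det, mapMatrix_vandermonde, heval,
    Matrix.det_vandermonde_ne_zero_iff]

lemma coeff_vandermondePolynomial_mul_psum_pow_mul_prod_factorial {k N : ℕ} (hk : k ≠ 0)
    {d : Fin n →₀ ℕ} (hd : d.degree = ∑ i : Fin n, (i : ℕ) + k * N) :
    coeff d (vandermondePolynomial n R * psum (Fin n) R k ^ N) *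
        ∏ i, ((d i / k).factorial : R) =
      N.factorial * (residueDescFactorialMatrix R k d).det := by
  rw [vandermondePolynomial_eq_sum_monomial, ← Matrix.det_transpose, Matrix.det_apply, sum_mul,
    coeff_sum, sum_mul, mul_sum]
  refine sum_congr rfl fun τ _ => ?_
  rw [← degree_equivFunOnFinite_symm_perm τ] at hd
  rw [smul_mul_assoc, Units.smul_def, coeff_smul, smul_mul_assoc,
    coeff_monomial_mul_psum_pow_mul_prod_factorial hk hd, Units.smul_def, mul_smul_comm]
  rfl

end Vandermonde

section Divisibility

lemma prod_tsub_dvd_factorial {a : ℕ} {s : Finset ℕ} (hs : ∀ b ∈ s, b < a) :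
    ∏ b ∈ s, (a - b) ∣ a.factorial := by
  have hinj : Set.InjOn (fun b => a - b) s := fun b hb c hc h => by
    have := hs b hb
    have := hs c hc
    simp only at h
    omega
  rw [← prod_image (f := fun c => c) hinj, ← prod_Ico_id_eq_factorial]
  refine prod_dvd_prod_of_subset _ _ _ (image_subset_iff.2 fun b hb => mem_Ico.2 ?_)
  have := hs b hb
  omega

lemma det_descFactorial {s : ℕ} (m : Fin s → ℕ) :
    (Matrix.of fun i j : Fin s => ((m i).descFactorial j : ℤ)).det =
      ∏ j, ∏ i ∈ Iio j, ((m j : ℤ) - m i) := by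
  have h := Matrix.det_eval_matrixOfPolynomials_eq_det_vandermonde (fun i => (m i : ℤ))
    (fun j => descPochhammer ℤ j) (fun j => descPochhammer_natDegree ℤ j)
    (fun j => monic_descPochhammer ℤ j)
  simp only [descPochhammer_eval_eq_descFactorial] at h
  rw [← h, Matrix.det_vandermonde]
  exact prod_comm' (by simp)

lemma det_descFactorial_dvd_prod_factorial {s : ℕ} {m : Fin s → ℕ} (hm : StrictMono m) :
    (Matrix.of fun i j : Fin s => ((m i).descFactorial j : ℤ)).det ∣
      ∏ i, ((m i).factorial : ℤ) := by
  rw [det_descFactorial]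
  refine prod_dvd_prod_of_dvd _ _ fun j _ => ?_
  have hlt : ∀ b ∈ (Iio j).image m, b < m j :=
    forall_mem_image.2 fun i hi => hm (mem_Iio.1 hi)
  have hcast : ∏ i ∈ Iio j, ((m j : ℤ) - m i) = (∏ b ∈ (Iio j).image m, (m j - b) : ℕ) := by
    rw [prod_image hm.injective.injOn, Nat.cast_prod]
    exact prod_congr rfl fun i hi => (Nat.cast_sub (hm (mem_Iio.1 hi)).le).symm
  rw [hcast]
  exact Int.natCast_dvd_natCast.2 (prod_tsub_dvd_factorial hlt)

/-- The enumeration `r, r + k, r + 2k, …` of the indices below `n` in the residue class of `r`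
modulo `k`. -/
def residueClassEquiv (n : ℕ) {k r : ℕ} (hr : r < k) :
    Fin ((n - r) ⌈/⌉ k) ≃ {i : Fin n // (i : ℕ) % k = r} where
  toFun t := ⟨⟨r + k * t, by
    have := lt_of_not_ge ((ceilDiv_le_iff_le_mul (by omega)).not.1 t.2.not_ge)
    omega⟩, by rw [Nat.add_mul_mod_self_left, Nat.mod_eq_of_lt hr]⟩
  invFun i := ⟨i / k, lt_of_not_ge <| (ceilDiv_le_iff_le_mul (by omega)).not.2 <| by
    have := Nat.div_add_mod (i : ℕ) k
    have := i.2
    omega⟩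
  left_inv t := Fin.ext <| by
    simp only [Nat.add_mul_div_left _ _ (Nat.zero_lt_of_lt hr), Nat.div_eq_of_lt hr, zero_add]
  right_inv i := Subtype.ext <| Fin.ext <| by
    have := Nat.div_add_mod (i : ℕ) k
    have := i.2
    simp only
    omega

lemma coe_residueClassEquiv {n k r : ℕ} (hr : r < k) (t : Fin ((n - r) ⌈/⌉ k)) :
    ((residueClassEquiv n hr t : Fin n) : ℕ) = r + k * t :=
  rfl

lemma residueClassEquiv_div {n k r : ℕ} (hr : r < k) (t : Fin ((n - r) ⌈/⌉ k)) :
    ((residueClassEquiv n hr t : Fin n) : ℕ) / k = t := by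
  rw [coe_residueClassEquiv, Nat.add_mul_div_left _ _ (Nat.zero_lt_of_lt hr),
    Nat.div_eq_of_lt hr, zero_add]

variable {n k : ℕ} {d : Fin n → ℕ}

lemma blockTriangular_residueDescFactorialMatrix (R : Type*) [AddMonoidWithOne R]
    (hmod : ∀ i, d i % k = i % k) :
    (residueDescFactorialMatrix R k d).BlockTriangular fun i => (i : ℕ) % k := fun i j hij => by
  rw [residueDescFactorialMatrix, Matrix.of_apply, residueDescFactorial,
    if_neg ((hmod i).trans_ne hij.ne'), Nat.cast_zero]

lemma det_toSquareBlock_residueDescFactorialMatrix_dvd {r : ℕ} (hr : r < k)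
    (hmod : ∀ i, d i % k = i % k)
    (hmono : ∀ i j : Fin n, i < j → (i : ℕ) % k = j % k → d i < d j) :
    ((residueDescFactorialMatrix ℤ k d).toSquareBlock (fun i => (i : ℕ) % k) r).det ∣
      ∏ i : {i : Fin n // (i : ℕ) % k = r}, ((d i / k).factorial : ℤ) := by
  set E := residueClassEquiv n hr
  have hmod_E (t) : d (E t) % k = r := (hmod _).trans (E t).2
  have hstrict : StrictMono fun t => d (E t) / k := fun t u htu => by
    have hlt : ((E t : Fin n) : ℕ) < (E u : Fin n) := by
      simpa [E, coe_residueClassEquiv, Nat.zero_lt_of_lt hr] using htu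
    have hd := hmono _ _ hlt ((E t).2.trans (E u).2.symm)
    change d (E t) / k < d (E u) / k
    refine lt_of_mul_lt_mul_left (a := k) ?_ k.zero_le
    have := Nat.div_add_mod (d (E t)) k
    have := Nat.div_add_mod (d (E u)) k
    have := hmod_E t
    have := hmod_E u
    omega
  have hblock :
      ((residueDescFactorialMatrix ℤ k d).toSquareBlock (fun i => (i : ℕ) % k) r).submatrix E E =
        Matrix.of fun t u : Fin _ => ((d (E t) / k).descFactorial u : ℤ) := by
    ext t u
    rw [Matrix.submatrix_apply, Matrix.toSquareBlock_def, Matrix.of_apply, Matrix.of_apply,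
      residueDescFactorialMatrix, Matrix.of_apply, residueDescFactorial,
      if_pos ((hmod_E t).trans (E u).2.symm), residueClassEquiv_div]
  rw [← Matrix.det_submatrix_equiv_self E, hblock, ← Equiv.prod_comp E]
  exact det_descFactorial_dvd_prod_factorial hstrict

lemma det_residueDescFactorialMatrix_dvd_prod_factorial (hk : k ≠ 0)
    (hmod : ∀ i, d i % k = i % k)
    (hmono : ∀ i j : Fin n, i < j → (i : ℕ) % k = j % k → d i < d j) :
    (residueDescFactorialMatrix ℤ k d).det ∣ ∏ i, ((d i / k).factorial : ℤ) := by
  rw [(blockTriangular_residueDescFactorialMatrix ℤ hmod).det,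
    ← prod_fiberwise_of_maps_to fun i _ => mem_image_of_mem (fun i : Fin n => (i : ℕ) % k)
      (mem_univ i)]
  refine prod_dvd_prod_of_dvd _ _ fun r hr => ?_
  have hrk : r < k := by
    obtain ⟨i, _, rfl⟩ := mem_image.1 hr
    exact Nat.mod_lt _ (Nat.pos_of_ne_zero hk)
  rw [prod_subtype (p := fun i : Fin n => (i : ℕ) % k = r) _ (by simp)]
  exact det_toSquareBlock_residueDescFactorialMatrix_dvd hrk hmod hmono

lemma coeff_vandermondePolynomial_mul_psum_pow_dvd_factorial (R : Type*) [CommRing R] {N : ℕ}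
    {d : Fin n →₀ ℕ} (hk : k ≠ 0) (hmod : ∀ i, d i % k = i % k)
    (hmono : ∀ i j : Fin n, i < j → (i : ℕ) % k = j % k → d i < d j)
    (hd : d.degree = ∑ i : Fin n, (i : ℕ) + k * N) :
    coeff d (vandermondePolynomial n R * psum (Fin n) R k ^ N) ∣ (N.factorial : R) := by
  have hint : coeff d (vandermondePolynomial n ℤ * psum (Fin n) ℤ k ^ N) ∣ (N.factorial : ℤ) := by
    obtain ⟨c, hc⟩ := det_residueDescFactorialMatrix_dvd_prod_factorial hk hmod hmono
    have hne : ∏ i, ((d i / k).factorial : ℤ) ≠ 0 :=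
      prod_ne_zero_iff.2 fun i _ => Nat.cast_ne_zero.2 (Nat.factorial_ne_zero _)
    have hcoeff := coeff_vandermondePolynomial_mul_psum_pow_mul_prod_factorial (R := ℤ) hk hd
    rw [hc] at hcoeff hne
    refine ⟨c, mul_left_cancel₀ (left_ne_zero_of_mul hne) ?_⟩
    linear_combination -hcoeff
  have hcast := map_dvd (Int.castRingHom R) hint
  rwa [← coeff_map, map_mul, map_pow, map_vandermondePolynomial, map_psum, map_natCast] at hcast

end Divisibility

section PolynomialMethod

lemma coeff_mul_prod_add_of_totalDegree_lt {σ ι R : Type*} [CommSemiring R] {s : Finset ι}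
    {p g : ι → MvPolynomial σ R} {k : ι → ℕ} (hp : ∀ i ∈ s, (p i).totalDegree ≤ k i)
    (hg : ∀ i ∈ s, (g i).totalDegree < k i) {P : MvPolynomial σ R} {d : σ →₀ ℕ}
    (hd : P.totalDegree + ∑ i ∈ s, k i ≤ d.degree) :
    coeff d (P * ∏ i ∈ s, (p i + g i)) = coeff d (P * ∏ i ∈ s, p i) := by
  induction s using Finset.cons_induction generalizing P with
  | empty => simp only [prod_empty]
  | cons a s ha ih =>
    rw [forall_mem_cons] at hp hg
    rw [sum_cons, ← add_assoc] at hd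
    have hPp : (P * (p a + g a)).totalDegree ≤ P.totalDegree + k a :=
      (totalDegree_mul _ _).trans <| Nat.add_le_add_left
        ((totalDegree_add _ _).trans (max_le hp.1 hg.1.le)) _
    have hlow : coeff d (P * g a * ∏ i ∈ s, p i) = 0 := by
      apply coeff_eq_zero_of_totalDegree_lt
      calc (P * g a * ∏ i ∈ s, p i).totalDegree
          ≤ P.totalDegree + (g a).totalDegree + ∑ i ∈ s, (p i).totalDegree :=
            (totalDegree_mul _ _).trans
              (Nat.add_le_add (totalDegree_mul _ _) (totalDegree_finsetProd _ _))
        _ < P.totalDegree + k a + ∑ i ∈ s, k i :=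
            add_lt_add_of_lt_of_le (Nat.add_lt_add_left hg.1 _) (sum_le_sum hp.2)
        _ ≤ d.degree := hd
    rw [prod_cons, prod_cons, ← mul_assoc, ih hp.2 hg.2 (le_trans (by gcongr) hd), mul_add, add_mul,
      coeff_add, hlow, add_zero, mul_assoc]

lemma exists_injective_eval_notMem {n : ℕ} {R : Type*} [CommRing R] [IsDomain R]
    {p g : MvPolynomial (Fin n) R} {k : ℕ} (hp : p.totalDegree ≤ k) (hg : g.totalDegree < k)
    {A : Fin n → Finset R} {D : Finset R} {d : Fin n →₀ ℕ}
    (hd : d.degree = ∑ i : Fin n, (i : ℕ) + k * #D) (hdA : ∀ i, d i < #(A i))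
    (hcoeff : coeff d (vandermondePolynomial n R * p ^ #D) ≠ 0) :
    ∃ x : Fin n → R, (∀ i, x i ∈ A i) ∧ Function.Injective x ∧ eval x (p + g) ∉ D := by
  set Q := vandermondePolynomial n R * ∏ c ∈ D, (p + (g - C c)) with hQ
  have hV := totalDegree_vandermondePolynomial_le (n := n) (R := R)
  have hg_sub (c) : (g - C c).totalDegree < k := (totalDegree_sub_C_le _ _).trans_lt hg
  have hsum : ∑ _c ∈ D, k = k * #D := by rw [sum_const, smul_eq_mul, mul_comm]
  have hQcoeff : coeff d Q ≠ 0 := by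
    rwa [hQ, coeff_mul_prod_add_of_totalDegree_lt (k := fun _ => k) (fun _ _ => hp)
      (fun c _ => hg_sub c) (by omega), prod_const]
  have hQdeg : Q.totalDegree = d.degree := by
    refine le_antisymm ?_ (le_totalDegree (mem_support_iff.2 hQcoeff))
    have hprod : (∏ c ∈ D, (p + (g - C c))).totalDegree ≤ k * #D :=
      (totalDegree_finsetProd _ _).trans <| (sum_le_sum fun c _ => (totalDegree_add _ _).trans
        (max_le hp (hg_sub c).le)).trans hsum.le
    rw [hd]
    exact (totalDegree_mul _ _).trans (Nat.add_le_add hV hprod)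
  obtain ⟨x, hxA, hx⟩ :=
    combinatorial_nullstellensatz_exists_eval_nonzero Q d hQcoeff hQdeg A hdA
  rw [hQ, map_mul, map_prod] at hx
  refine ⟨x, hxA, eval_vandermondePolynomial_ne_zero_iff.1 (left_ne_zero_of_mul hx), fun hmem => ?_⟩
  refine prod_ne_zero_iff.1 (right_ne_zero_of_mul hx) _ hmem ?_
  simp

end PolynomialMethod

lemma sum_min_tsub_sum_Ioi {n : ℕ} (q : Fin n → ℕ) (t : ℕ) :
    ∑ i, min (q i) (t - ∑ j ∈ Ioi i, q j) = min t (∑ i, q i) := by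
  induction n with
  | zero => simp
  | succ n ih =>
    have htail := ih fun i => q i.succ
    simp only [Fin.sum_univ_succ, Fin.sum_Ioi_zero, Fin.sum_Ioi_succ, htail]
    omega

lemma exists_le_sum_eq_of_le_sum {n : ℕ} (q : Fin n → ℕ) {t : ℕ} (ht : t ≤ ∑ i, q i) :
    ∃ q' ≤ q, ∑ i, q' i = t ∧ ∀ i j, i ≤ j → q i ≤ q j → q' i ≤ q' j := by
  -- Fill up the total `t` greedily, starting from the largest index.
  refine ⟨fun i => min (q i) (t - ∑ j ∈ Ioi i, q j), fun i => min_le_left _ _,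
    (sum_min_tsub_sum_Ioi q t).trans (min_eq_left ht), fun i j hij hq => ?_⟩
  exact min_le_min hq (Nat.sub_le_sub_left (sum_le_sum_of_subset (Ioi_subset_Ioi hij)) t)

lemma cast_factorial_ne_zero_of_lt_ringChar {R : Type*} [CommRing R] [IsDomain R] {N : ℕ}
    (hN : (N : ℕ∞) < if ringChar R = 0 then (⊤ : ℕ∞) else (ringChar R : ℕ∞)) :
    (N.factorial : R) ≠ 0 := by
  rw [Ne, ringChar.spec]
  rcases CharP.char_is_prime_or_zero R (ringChar R) with hprime | hzero
  · rw [if_neg hprime.ne_zero, Nat.cast_lt] at hN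
    rwa [hprime.dvd_factorial, not_le]
  · rw [hzero, zero_dvd_iff]
    exact N.factorial_ne_zero

lemma exists_injective_eval_psum_add_notMem {n k : ℕ} {R : Type*} [CommRing R] [IsDomain R]
    {g : MvPolynomial (Fin n) R} (hg : g.totalDegree < k) {A : Fin n → Finset R} {q : Fin n → ℕ}
    (hqA : ∀ i, k * q i + i < #(A i))
    (hq : ∀ i j : Fin n, i ≤ j → (j : ℕ) % k = i % k → q i ≤ q j)
    {D : Finset R} (hDq : #D ≤ ∑ i, q i) (hD : ((#D).factorial : R) ≠ 0) :
    ∃ x : Fin n → R, (∀ i, x i ∈ A i) ∧ Function.Injective x ∧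
      eval x (psum (Fin n) R k + g) ∉ D := by
  obtain ⟨q', hq'q, hq'D, hq'⟩ := exists_le_sum_eq_of_le_sum q hDq
  set d : Fin n →₀ ℕ := Finsupp.equivFunOnFinite.symm fun i => k * q' i + i
  have hd : d.degree = ∑ i : Fin n, (i : ℕ) + k * #D := by
    simp [d, Finsupp.degree_eq_sum, sum_add_distrib, ← mul_sum, hq'D, add_comm]
  have hmono : ∀ i j : Fin n, i < j → (i : ℕ) % k = j % k → d i < d j := fun i j hij hmod =>
    add_lt_add_of_le_of_lt
      (Nat.mul_le_mul_left k (hq' i j hij.le (hq i j hij.le hmod.symm))) hij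
  have hdvd := coeff_vandermondePolynomial_mul_psum_pow_dvd_factorial R (by omega)
    (fun i => Nat.mul_add_mod k (q' i) i) hmono hd
  refine exists_injective_eval_notMem (totalDegree_psum_le k) hg hd (fun i => ?_)
    (ne_zero_of_dvd_ne_zero hD hdvd)
  exact (Nat.add_le_add_right (Nat.mul_le_mul_left k (hq'q i)) i).trans_lt (hqA i)

theorem stmt_3_general {F : Type*} [CommRing F] [IsDomain F] (n k : ℕ)
    (A : Fin n → Finset F) (hA : ∀ i : Fin n, i.1 + 1 ≤ (A i).card)
    (g f : MvPolynomial (Fin n) F)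
    (hf : f = (∑ i : Fin n, (X i : MvPolynomial (Fin n) F) ^ k) + g)
    (hg : g.totalDegree < k)
    (q : Fin n → ℕ)
    (hq : ∀ i : Fin n, q i =
      sInf {c : ℕ | ∃ j : Fin n, i ≤ j ∧ j.1 % k = i.1 % k ∧
        c = ((A j).card - (j.1 + 1)) / k}) :
    min (if ringChar F = 0 then (⊤ : ℕ∞) else (ringChar F : ℕ∞))
        ((∑ i : Fin n, q i) + 1 : ℕ) ≤
      ({y : F | ∃ x : Fin n → F, (∀ i, x i ∈ A i) ∧ Function.Injective x ∧
          MvPolynomial.eval x f = y}.ncard : ℕ∞) := by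
  classical
  have hqA : ∀ i, k * q i + i < #(A i) := fun i => by
    have hle : q i ≤ (#(A i) - (i + 1)) / k := by
      rw [hq i]
      exact Nat.sInf_le ⟨i, le_rfl, rfl, rfl⟩
    have := (Nat.mul_le_mul_left k hle).trans (Nat.mul_div_le _ _)
    have := hA i
    omega
  have hqmono : ∀ i j : Fin n, i ≤ j → (j : ℕ) % k = i % k → q i ≤ q j := fun i j hij hmod => by
    rw [hq i, hq j]
    refine csInf_le_csInf (OrderBot.bddBelow _) ⟨_, j, le_rfl, rfl, rfl⟩ ?_
    rintro _ ⟨l, hjl, hl, rfl⟩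
    exact ⟨l, hij.trans hjl, hl.trans hmod, rfl⟩
  set S : Set F := {y | ∃ x : Fin n → F, (∀ i, x i ∈ A i) ∧ Function.Injective x ∧ eval x f = y}
  have hS : S.Finite := ((Fintype.piFinset A).image fun x => eval x f).finite_toSet.subset <| by
    rintro _ ⟨x, hx, -, rfl⟩
    exact mem_coe.2 (mem_image_of_mem _ (Fintype.mem_piFinset.2 hx))
  by_contra! hlt
  rw [Set.ncard_eq_toFinset_card S hS, lt_min_iff, Nat.cast_lt, Nat.lt_succ_iff] at hlt
  obtain ⟨x, hxA, hxinj, hx⟩ := exists_injective_eval_psum_add_notMem hg hqA hqmono hlt.2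
    (cast_factorial_ne_zero_of_lt_ringChar hlt.1)
  exact hx (hS.mem_toFinset.2 ⟨x, hxA, hxinj, by rw [hf, psum]⟩)

theorem stmt_3 {F : Type*} [Field F] (n k : ℕ) (hk1 : 1 ≤ k) (hkn : k ≤ n)
    (A : Fin n → Finset F) (hA : ∀ i : Fin n, i.1 + 1 ≤ (A i).card)
    (g f : MvPolynomial (Fin n) F)
    (hf : f = (∑ i : Fin n, (X i : MvPolynomial (Fin n) F) ^ k) + g)
    (hg : g.totalDegree < k)
    (q : Fin n → ℕ)
    (hq : ∀ i : Fin n, q i =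
      sInf {c : ℕ | ∃ j : Fin n, i ≤ j ∧ j.1 % k = i.1 % k ∧
        c = ((A j).card - (j.1 + 1)) / k}) :
    min (if ringChar F = 0 then (⊤ : ℕ∞) else (ringChar F : ℕ∞))
        ((∑ i : Fin n, q i) + 1 : ℕ) ≤
      ({y : F | ∃ x : Fin n → F, (∀ i, x i ∈ A i) ∧ Function.Injective x ∧
          MvPolynomial.eval x f = y}.ncard : ℕ∞) :=
  stmt_3_general n k A hA g f hf hg q hq
end

section
/- Let F be a field of characteristic 0 or of prime characteristic p, and let A be a finite subset of F. For n ≥ 1, |{ x₁ + ⋯ + xₙ : x₁,…,xₙ ∈ A pairwise distinct }| ≥ min{ p(F), n(|A| − n) + 1 }. -/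
/-!
The polynomial method of Alon, Nathanson and Ruzsa. If the sums of pairwise distinct elements of `A`
all lay in a set `S` with at most `m` elements, then the polynomial
`∏_{i < j} (X j - X i) * ∏_{s ∈ S} (∑ i, X i - s)` would vanish on `A × ⋯ × A`, which the
combinatorial Nullstellensatz forbids as soon as a suitable top coefficient is nonzero. Padding the
second factor to degree `m`, that is a coefficient of `∏_{i < j} (X j - X i) * (∑ i, X i) ^ m`; at
`∏ i, X i ^ c i` it is `m! * ∏_{i < j} (c j - c i) / ∏ i, (c i)!`. Distinct exponents `c i < |A|`
differing by at most `n` make it nonzero when `m` and `n` are below the characteristic. If instead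
the characteristic is at most `n < |A|`, then deleting each element in turn from an `(n + 1)`-subset
of `A` already gives `n + 1` sums.
-/

open Finset Function

section DistinctSums

variable {ι M : Type*} [Fintype ι] [DecidableEq ι] [DecidableEq M]

/-- The restricted sumset of a family of finite sets `A i`: all sums `∑ i, x i` of pairwise distinct
elements `x i ∈ A i`. For a constant family indexed by `Fin n` this is the set of sums of `n`
distinct elements, often written `n^A`. -/
def distinctSums [AddCommMonoid M] (A : ι → Finset M) : Finset M :=
  {x ∈ Fintype.piFinset A | Injective x}.image fun x ↦ ∑ i, x i

lemma mem_distinctSums [AddCommMonoid M] {A : ι → Finset M} {y : M} :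
    y ∈ distinctSums A ↔ ∃ x : ι → M, (∀ i, x i ∈ A i) ∧ Injective x ∧ ∑ i, x i = y := by
  simp [distinctSums, and_assoc]

lemma distinctSums_const_nonempty [AddCommMonoid M] {A : Finset M} (hA : Fintype.card ι ≤ #A) :
    (distinctSums fun _ : ι ↦ A).Nonempty := by
  obtain ⟨e⟩ : Nonempty (ι ↪ A) := Embedding.nonempty_of_card_le (by simpa using hA)
  exact ⟨_, mem_distinctSums.2
    ⟨fun i ↦ e i, fun i ↦ (e i).2, Subtype.val_injective.comp e.injective, rfl⟩⟩

lemma lt_card_distinctSums_of_lt_card [AddCancelCommMonoid M] {n : ℕ} {A : Finset M}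
    (hA : n < #A) : n < #(distinctSums fun _ : Fin n ↦ A) := by
  obtain ⟨e⟩ : Nonempty (Fin (n + 1) ↪ A) := Embedding.nonempty_of_card_le (by simpa using hA)
  have he : Injective fun i ↦ (e i : M) := Subtype.val_injective.comp e.injective
  let sumOmitting (a : Fin (n + 1)) : M := ∑ i, (e (a.succAbove i) : M)
  have total (a : Fin (n + 1)) : e a + sumOmitting a = ∑ i, (e i : M) :=
    (Fin.sum_univ_succAbove (fun i ↦ (e i : M)) a).symm
  have sumOmitting_injective : Injective sumOmitting := fun a b hab ↦
    he (add_right_cancel (b := sumOmitting a) ((total a).trans (hab ▸ (total b).symm)))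
  have sumOmitting_mem (a : Fin (n + 1)) : sumOmitting a ∈ distinctSums fun _ : Fin n ↦ A :=
    mem_distinctSums.2
      ⟨_, fun i ↦ (e _).2, he.comp (Fin.succAbove_right_injective (p := a)), rfl⟩
  simpa using card_le_card_of_injOn (s := univ) sumOmitting (fun a _ ↦ sumOmitting_mem a)
    sumOmitting_injective.injOn

end DistinctSums

section PolynomialMethod

open MvPolynomial

variable {R σ : Type*}

lemma totalDegree_aeval_le [CommSemiring R] (g : Polynomial R) (Y : MvPolynomial σ R) :
    (Polynomial.aeval Y g).totalDegree ≤ g.natDegree * Y.totalDegree := by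
  rw [Polynomial.aeval_eq_sum_range]
  refine totalDegree_finsetSum_le fun k hk ↦ ?_
  calc (g.coeff k • Y ^ k).totalDegree
      ≤ k * Y.totalDegree := (totalDegree_smul_le _ _).trans (totalDegree_pow _ _)
    _ ≤ g.natDegree * Y.totalDegree := by gcongr; grind

lemma coeff_mul_aeval_of_monic [CommSemiring R] {h Y : MvPolynomial σ R} {g : Polynomial R}
    {c : σ →₀ ℕ} (hg : g.Monic) (hY : Y.totalDegree ≤ 1)
    (hc : h.totalDegree + g.natDegree ≤ c.degree) :
    coeff c (h * Polynomial.aeval Y g) = coeff c (h * Y ^ g.natDegree) := by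
  have lower_vanishes : coeff c (h * Polynomial.aeval Y g.eraseLead) = 0 := by
    obtain hlt | h0 := g.eraseLead_natDegree_lt_or_eraseLead_eq_zero
    · refine coeff_eq_zero_of_totalDegree_lt ?_
      calc (h * Polynomial.aeval Y g.eraseLead).totalDegree
          ≤ h.totalDegree + g.eraseLead.natDegree * Y.totalDegree :=
            (totalDegree_mul _ _).trans (by gcongr; exact totalDegree_aeval_le _ _)
        _ ≤ h.totalDegree + g.eraseLead.natDegree * 1 := by gcongr
        _ < h.totalDegree + g.natDegree := by lia
        _ ≤ c.degree := hc
    · simp [h0]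
  conv_lhs => rw [← g.eraseLead_add_C_mul_X_pow, hg.leadingCoeff]
  simp [mul_add, lower_vanishes]

lemma totalDegree_sum_X_le [CommSemiring R] [Fintype σ] :
    (∑ i, X i : MvPolynomial σ R).totalDegree ≤ 1 :=
  totalDegree_finsetSum_le fun i _ ↦ (isHomogeneous_X R i).totalDegree_le

variable [CommRing R] [IsDomain R] [Fintype σ]

lemma exists_eval_ne_zero_sum_notMem {h : MvPolynomial σ R} {c : σ →₀ ℕ} {A : σ → Finset R}
    {S : Finset R} (hdeg : h.totalDegree + #S ≤ c.degree)
    (hcoeff : coeff c (h * (∑ i, X i) ^ #S) ≠ 0) (hc : ∀ i, c i < #(A i)) :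
    ∃ x : σ → R, (∀ i, x i ∈ A i) ∧ eval x h ≠ 0 ∧ ∑ i, x i ∉ S := by
  let g : Polynomial R := ∏ s ∈ S, (Polynomial.X - Polynomial.C s)
  let f : MvPolynomial σ R := h * Polynomial.aeval (∑ i, X i) g
  have g_monic : g.Monic := Polynomial.monic_prod_X_sub_C _ _
  have g_natDegree : g.natDegree = #S := Polynomial.natDegree_finsetProd_X_sub_C_eq_card _ _
  have f_coeff : coeff c f ≠ 0 := by
    rwa [coeff_mul_aeval_of_monic g_monic totalDegree_sum_X_le (by rwa [g_natDegree]),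
      g_natDegree]
  have f_totalDegree : f.totalDegree = c.degree := by
    refine le_antisymm ?_ (le_totalDegree (mem_support_iff.2 f_coeff))
    calc f.totalDegree
        ≤ h.totalDegree + g.natDegree * (∑ i, X i : MvPolynomial σ R).totalDegree :=
          (totalDegree_mul _ _).trans (by gcongr; exact totalDegree_aeval_le _ _)
      _ ≤ h.totalDegree + #S * 1 := by rw [g_natDegree]; gcongr; exact totalDegree_sum_X_le
      _ ≤ c.degree := by rwa [mul_one]
  obtain ⟨x, hxA, hfx⟩ :=
    combinatorial_nullstellensatz_exists_eval_nonzero f c f_coeff f_totalDegree A hc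
  have f_eval : eval x f = eval x h * ∏ s ∈ S, (∑ i, x i - s) := by
    simp [f, g, algebraMap_eq]
  rw [f_eval] at hfx
  refine ⟨x, hxA, left_ne_zero_of_mul hfx, fun hmem ↦ right_ne_zero_of_mul hfx ?_⟩
  exact prod_eq_zero hmem (sub_self _)

/-- The **Alon–Nathanson–Ruzsa theorem**. -/
theorem lt_card_of_coeff_mul_sum_X_pow_ne_zero {h : MvPolynomial σ R} {m : ℕ} {c : σ →₀ ℕ}
    {A : σ → Finset R} {S : Finset R} (hdeg : h.totalDegree + m ≤ c.degree)
    (hcoeff : coeff c (h * (∑ i, X i) ^ m) ≠ 0) (hc : ∀ i, c i < #(A i))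
    (hS : ∀ x : σ → R, (∀ i, x i ∈ A i) → eval x h ≠ 0 → ∑ i, x i ∈ S) :
    m < #S := by
  by_contra! hSm
  let padded : MvPolynomial σ R := h * (∑ i, X i) ^ (m - #S)
  have padded_totalDegree : padded.totalDegree ≤ h.totalDegree + (m - #S) * 1 := by
    refine (totalDegree_mul _ _).trans ?_
    gcongr
    exact (totalDegree_pow _ _).trans (by gcongr; exact totalDegree_sum_X_le)
  have padded_coeff : coeff c (padded * (∑ i, X i) ^ #S) ≠ 0 := by
    rwa [mul_assoc, ← pow_add, Nat.sub_add_cancel hSm]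
  obtain ⟨x, hxA, hx, hxS⟩ := exists_eval_ne_zero_sum_notMem (by lia) padded_coeff hc
  rw [map_mul] at hx
  exact hxS (hS x hxA (left_ne_zero_of_mul hx))

end PolynomialMethod

section VandermondeCoefficient

open MvPolynomial Matrix Nat

variable {R σ : Type*} {n m : ℕ}

lemma prod_factorial_mul_coeff_sum_X_pow [CommSemiring R] [Fintype σ]
    {d : σ →₀ ℕ} (hd : ∑ i, d i = m) :
    (∏ i, ((d i)! : R)) * coeff d ((∑ i, X i : MvPolynomial σ R) ^ m) = m ! := by
  rw [coeff_sum_X_pow_of_fintype, if_pos (by rwa [Finsupp.sum_fintype _ _ fun _ ↦ rfl]),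
    Finsupp.multinomial_eq_of_support_subset (subset_univ _), ← hd,
    ← Nat.multinomial_spec univ d]
  push_cast
  rfl

lemma prod_factorial_mul_coeff_prod_X_pow_mul_sum_X_pow [CommSemiring R] [Fintype σ]
    {c e : σ →₀ ℕ} (hc : ∑ i, c i = m + ∑ i, e i) :
    (∏ i, ((c i)! : R)) * coeff c ((∏ i, X i ^ e i) * (∑ i, X i : MvPolynomial σ R) ^ m) =
      m ! * ∏ i, ((c i).descFactorial (e i) : R) := by
  have monomial_e : (∏ i, X i ^ e i : MvPolynomial σ R) = monomial e 1 := by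
    rw [monomial_eq, C_1, one_mul, Finsupp.prod_fintype _ _ fun _ ↦ pow_zero _]
  rw [monomial_e, coeff_monomial_mul']
  split_ifs with hec
  · have hsum : ∑ i, (c - e) i = m := by
      simp_rw [Finsupp.tsub_apply, Finset.sum_tsub_distrib _ fun i _ ↦ hec i]
      lia
    have hfactorial (i : σ) : ((c i)! : R) = ((c - e) i)! * (c i).descFactorial (e i) := by
      rw [← Nat.factorial_mul_descFactorial (hec i), Finsupp.tsub_apply, Nat.cast_mul]
    rw [← prod_factorial_mul_coeff_sum_X_pow hsum, Finset.prod_congr rfl fun i _ ↦ hfactorial i,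
      Finset.prod_mul_distrib]
    ring
  · obtain ⟨i, hi⟩ : ∃ i, c i < e i := by simpa [Finsupp.le_def] using hec
    have hzero : ((c i).descFactorial (e i) : R) = 0 := by
      rw [Nat.descFactorial_of_lt hi, Nat.cast_zero]
    rw [mul_zero, Finset.prod_eq_zero (mem_univ i) hzero, mul_zero]

variable [CommRing R]

lemma det_vandermonde_natCast (c : Fin n → ℕ) :
    (vandermonde fun i ↦ (c i : R)).det =
      (of fun i j : Fin n ↦ ((c i).descFactorial j : R)).det := by
  have over_int := det_eval_matrixOfPolynomials_eq_det_vandermonde (fun i ↦ (c i : ℤ))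
    (fun j ↦ descPochhammer ℤ j) (fun j ↦ descPochhammer_natDegree ℤ j)
    (fun j ↦ monic_descPochhammer ℤ j)
  simp only [descPochhammer_eval_eq_descFactorial] at over_int
  have cast_to_R := congr_arg (Int.castRingHom R) over_int
  rw [RingHom.map_det, RingHom.map_det] at cast_to_R
  convert cast_to_R using 2 <;> ext i j <;> simp [vandermonde_apply]

lemma det_vandermonde_eq_sum_sign_mul_prod (v : Fin n → R) :
    (vandermonde v).det = ∑ τ : Equiv.Perm (Fin n), (τ.sign : R) * ∏ i, v i ^ (τ i : ℕ) := by
  rw [← det_transpose, det_apply']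
  rfl

lemma isHomogeneous_det_vandermonde_X :
    (vandermonde (X : Fin n → MvPolynomial (Fin n) R)).det.IsHomogeneous
      (∑ i : Fin n, (i : ℕ)) := by
  rw [det_vandermonde_eq_sum_sign_mul_prod]
  refine IsHomogeneous.sum _ _ _ fun τ _ ↦ ?_
  rw [← map_intCast (C : R →+* MvPolynomial (Fin n) R), ← Equiv.sum_comp τ (fun i ↦ (i : ℕ))]
  exact (IsHomogeneous.prod _ _ _ fun i _ ↦ isHomogeneous_X_pow i _).C_mul _

theorem prod_factorial_mul_coeff_det_vandermonde_mul_sum_X_pow {c : Fin n →₀ ℕ}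
    (hc : ∑ i, c i = m + ∑ i : Fin n, (i : ℕ)) :
    (∏ i, ((c i)! : R)) *
        coeff c ((vandermonde (X : Fin n → MvPolynomial (Fin n) R)).det * (∑ i, X i) ^ m) =
      m ! * (vandermonde fun i ↦ (c i : R)).det := by
  rw [det_vandermonde_eq_sum_sign_mul_prod, Finset.sum_mul, coeff_sum, Finset.mul_sum,
    det_vandermonde_natCast, ← det_transpose (of _), det_apply', Finset.mul_sum]
  refine Finset.sum_congr rfl fun τ _ ↦ ?_
  have permuted_term := prod_factorial_mul_coeff_prod_X_pow_mul_sum_X_pow (R := R) (c := c) (m := m)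
    (e := Finsupp.equivFunOnFinite.symm fun i ↦ (τ i : ℕ))
    (by simpa [Equiv.sum_comp τ (fun i ↦ (i : ℕ))] using hc)
  simp only [Finsupp.equivFunOnFinite_symm_apply_apply] at permuted_term
  rw [← map_intCast (C : R →+* MvPolynomial (Fin n) R), mul_assoc, coeff_C_mul, mul_left_comm,
    permuted_term, mul_left_comm]
  rfl

end VandermondeCoefficient

section Exponents

open Nat

variable {R : Type*} {m n k : ℕ}

lemma natCast_ne_natCast_of_lt_of_le_add [NonAssocRing R] {a b : ℕ} (hn : (n ! : R) ≠ 0)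
    (hab : a < b) (hbn : b ≤ a + n) : (a : R) ≠ b := by
  obtain ⟨d, hd⟩ : b - a ∣ n ! := Nat.dvd_factorial (by lia) (by lia)
  rintro heq
  rw [hd, Nat.cast_mul, Nat.cast_sub hab.le, heq, sub_self, zero_mul] at hn
  exact hn rfl

lemma natCast_factorial_ne_zero_of_lt_ringChar [Ring R] [IsDomain R]
    (hk : (k : ℕ∞) < if ringChar R = 0 then ⊤ else (ringChar R : ℕ∞)) : (k ! : R) ≠ 0 := by
  obtain hp | hp := CharP.char_is_prime_or_zero R (ringChar R)
  · have : Fact (ringChar R).Prime := ⟨hp⟩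
    rw [if_neg hp.ne_zero, Nat.cast_lt] at hk
    exact ((IsUnit.natCast_factorial_iff_of_charP (ringChar R)).2 hk).ne_zero
  · have : CharZero R := (CharP.ringChar_zero_iff_CharZero R).1 hp
    exact_mod_cast k.factorial_ne_zero

/-- The case `x = m / n` of **Hermite's identity** `∑ i < n, ⌊x + i / n⌋ = ⌊n * x⌋`. -/
lemma sum_range_add_div (hn : 0 < n) (m : ℕ) : ∑ i ∈ range n, (m + i) / n = m := by
  induction m with
  | zero => exact sum_eq_zero fun i hi ↦ by rw [zero_add, Nat.div_eq_of_lt (mem_range.1 hi)]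
  | succ m ih =>
    have shift := (sum_range_succ' (fun i ↦ (m + i) / n) n).symm.trans
      (sum_range_succ (fun i ↦ (m + i) / n) n)
    rw [ih, Nat.add_div_right m hn, add_zero] at shift
    simp_rw [Nat.add_right_comm m 1]
    lia

lemma exists_strictMono_le_add_sum_eq (hm : m ≤ n * k) :
    ∃ c : Fin n → ℕ, StrictMono c ∧ (∀ i j, c j ≤ c i + n) ∧ (∀ i, c i < n + k) ∧
      ∑ i, c i = m + ∑ i : Fin n, (i : ℕ) := by
  obtain rfl | hn := n.eq_zero_or_pos
  · exact ⟨0, by simp [StrictMono, show m = 0 by simpa using hm]⟩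
  refine ⟨fun i ↦ i + (m + i) / n, fun i j hij ↦ ?_, fun i j ↦ ?_, fun i ↦ ?_, ?_⟩
  · exact add_lt_add_of_lt_of_le hij (by gcongr; exact hij.le)
  · have : (m + j) / n ≤ (m + i) / n + 1 := by
      rw [← Nat.add_div_right _ hn]
      gcongr ?_ / n
      lia
    lia
  · have : (m + i) / n ≤ k := by
      rw [← Nat.lt_add_one_iff, Nat.div_lt_iff_lt_mul hn]
      lia
    lia
  · rw [Finset.sum_add_distrib, Fin.sum_univ_eq_sum_range (fun i ↦ (m + i) / n),
      sum_range_add_div hn, add_comm]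

end Exponents

section DiasDaSilvaHamidoune

open Matrix MvPolynomial Nat

variable {R : Type*} [CommRing R] [IsDomain R] [DecidableEq R] {m n : ℕ}

theorem lt_card_distinctSums_of_sum_eq {A : Fin n → Finset R} {c : Fin n → ℕ}
    (hsum : ∑ i, c i = m + ∑ i : Fin n, (i : ℕ)) (hcA : ∀ i, c i < #(A i))
    (hc : Injective fun i ↦ (c i : R)) (hm : (m ! : R) ≠ 0) : m < #(distinctSums A) := by
  let V : MvPolynomial (Fin n) R := (vandermonde X).det
  have eval_V (x : Fin n → R) : eval x V = (vandermonde x).det := by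
    simp [V, det_vandermonde]
  let exponents : Fin n →₀ ℕ := Finsupp.equivFunOnFinite.symm c
  refine lt_card_of_coeff_mul_sum_X_pow_ne_zero (h := V) (c := exponents) ?_ (fun hcoeff ↦ ?_) hcA
    fun x hxA hx ↦ ?_
  · rw [Finsupp.degree_eq_sum, add_comm]
    exact (add_le_add_right isHomogeneous_det_vandermonde_X.totalDegree_le m).trans hsum.ge
  · have hzero :=
      prod_factorial_mul_coeff_det_vandermonde_mul_sum_X_pow (R := R) (c := exponents) hsum
    rw [hcoeff, mul_zero] at hzero
    exact mul_ne_zero hm (det_vandermonde_ne_zero_iff.2 hc) hzero.symm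
  · rw [eval_V, det_vandermonde_ne_zero_iff] at hx
    exact mem_distinctSums.2 ⟨x, hxA, hx, rfl⟩

theorem lt_card_distinctSums_const {A : Finset R} (hA : n ≤ #A) (hm : m ≤ n * (#A - n))
    (hn_fac : (n ! : R) ≠ 0) (hm_fac : (m ! : R) ≠ 0) :
    m < #(distinctSums fun _ : Fin n ↦ A) := by
  obtain ⟨c, c_strictMono, c_le, c_lt, c_sum⟩ := exists_strictMono_le_add_sum_eq hm
  have c_cast_injective : Injective fun i ↦ (c i : R) := Injective.of_lt_imp_ne fun i j hij ↦
    natCast_ne_natCast_of_lt_of_le_add hn_fac (c_strictMono hij) (c_le i j)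
  exact lt_card_distinctSums_of_sum_eq c_sum (fun i ↦ by grind) c_cast_injective hm_fac

end DiasDaSilvaHamidoune

theorem stmt_5_general {R : Type*} [CommRing R] [IsDomain R] (n : ℕ) (A : Finset R)
    (hA : n ≤ A.card) :
    min (if ringChar R = 0 then (⊤ : ℕ∞) else (ringChar R : ℕ∞))
        ((n * (A.card - n) + 1 : ℕ)) ≤
      ({y : R | ∃ x : Fin n → R, (∀ i, x i ∈ A) ∧ Function.Injective x ∧
          (∑ i, x i) = y}.ncard : ℕ∞) := by
  classical
  set S := distinctSums fun _ : Fin n ↦ A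
  have coe_S : {y : R | ∃ x : Fin n → R, (∀ i, x i ∈ A) ∧ Injective x ∧ ∑ i, x i = y} = S :=
    Set.ext fun y ↦ mem_distinctSums.symm
  rw [coe_S, Set.ncard_coe_finset]
  by_contra! hlt
  obtain ⟨hchar, hbound⟩ := lt_min_iff.1 hlt
  have hcard : #S ≤ n * (#A - n) := Nat.lt_succ_iff.1 (by exact_mod_cast hbound)
  by_cases hn : (n : ℕ∞) < if ringChar R = 0 then ⊤ else (ringChar R : ℕ∞)
  · exact (lt_card_distinctSums_const hA hcard (natCast_factorial_ne_zero_of_lt_ringChar hn)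
      (natCast_factorial_ne_zero_of_lt_ringChar hchar)).false
  · have hSn : #S < n := by exact_mod_cast hchar.trans_le (not_lt.1 hn)
    have hAn : #A = n := hA.antisymm' (not_lt.1 fun h ↦
      (lt_card_distinctSums_of_lt_card h).not_gt hSn)
    have S_nonempty : S.Nonempty := distinctSums_const_nonempty (by simpa using hA)
    exact S_nonempty.card_pos.ne' (by simpa [hAn] using hcard)

theorem stmt_5 {F : Type*} [Field F] (n : ℕ) (hn : 1 ≤ n)
    (A : Finset F) (hA : n ≤ A.card) :
    min (if ringChar F = 0 then (⊤ : ℕ∞) else (ringChar F : ℕ∞))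
        ((n * (A.card - n) + 1 : ℕ)) ≤
      ({y : F | ∃ x : Fin n → F, (∀ i, x i ∈ A) ∧ Function.Injective x ∧
          (∑ i, x i) = y}.ncard : ℕ∞) :=
  stmt_5_general n A hA
end

section
/- Let A₁,…,Aₙ be finite nonempty subsets of a field F and let f(x₁,…,xₙ) = a₁x₁^k + ⋯ + aₙxₙ^k + g(x₁,…,xₙ) with k ≥ 1, a₁,…,aₙ ∈ F \ {0}, and deg g < k. Then |{ f(x₁,…,xₙ) : xᵢ ∈ Aᵢ }| ≥ min{ p(F), 1 + Σ_{i=1}^n ⌊(|Aᵢ| − 1)/k⌋ }. -/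
open MvPolynomial

/-!
If the value set `S` of `f` were too small, then `∏ y ∈ S, (f - y)` would vanish on the whole grid
`∏ i, A i`. Its top homogeneous part is `(∑ i, a i * X i ^ k) ^ #S`, in which every monomial
`∏ i, X i ^ (k * m i)` with `∑ i, m i = #S` has a multinomial coefficient times a product of powers
of the `a i`, which is nonzero when the characteristic is zero or exceeds `#S`. Choosing
`m i ≤ (#(A i) - 1) / k` contradicts the Combinatorial Nullstellensatz.
-/

open Finset
open scoped Nat

lemma multinomial_dvd_factorial_degree {σ : Type*} (m : σ →₀ ℕ) : m.multinomial ∣ m.degree ! :=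
  Dvd.intro_left _ (Nat.multinomial_spec m.support m)

lemma natCast_factorial_ne_zero_iff {R : Type*} [NonAssocSemiring R] [NoZeroDivisors R]
    [Nontrivial R] {N : ℕ} : (N ! : R) ≠ 0 ↔ ringChar R = 0 ∨ N < ringChar R := by
  rw [Ne, ringChar.spec]
  rcases CharP.char_is_prime_or_zero R (ringChar R) with hp | h0
  · simp [hp.dvd_factorial, hp.ne_zero]
  · simp [h0, N.factorial_ne_zero]

section HomogeneousComponent

variable {σ R : Type*} [CommSemiring R]

lemma homogeneousComponent_mul_of_totalDegree_le {p q : MvPolynomial σ R} {m n : ℕ}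
    (hp : p.totalDegree ≤ m) (hq : q.totalDegree ≤ n) :
    homogeneousComponent (m + n) (p * q) =
      homogeneousComponent m p * homogeneousComponent n q := by
  classical
  ext d
  by_cases hd : d.degree = m + n
  · rw [coeff_homogeneousComponent, if_pos hd, coeff_mul, coeff_mul]
    refine sum_congr rfl fun ⟨u, v⟩ huv ↦ ?_
    have hdeg : u.degree + v.degree = m + n := by
      rw [← map_add, mem_antidiagonal.mp huv, hd]
    simp only [coeff_homogeneousComponent]
    rcases lt_trichotomy u.degree m with hu | hu | hu
    · rw [if_neg hu.ne, zero_mul, coeff_eq_zero_of_totalDegree_lt (f := q), mul_zero]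
      exact hq.trans_lt (show n < v.degree by lia)
    · rw [if_pos hu, if_pos (by lia)]
    · rw [if_neg hu.ne', zero_mul, coeff_eq_zero_of_totalDegree_lt (f := p), zero_mul]
      exact hp.trans_lt hu
  · have hhom := (homogeneousComponent_isHomogeneous m p).mul
      (homogeneousComponent_isHomogeneous n q)
    rw [coeff_homogeneousComponent, if_neg hd, hhom.coeff_eq_zero hd]

lemma homogeneousComponent_prod_of_totalDegree_le {ι : Type*} (s : Finset ι)
    {p : ι → MvPolynomial σ R} {n : ι → ℕ} (hp : ∀ i ∈ s, (p i).totalDegree ≤ n i) :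
    homogeneousComponent (∑ i ∈ s, n i) (∏ i ∈ s, p i) =
      ∏ i ∈ s, homogeneousComponent (n i) (p i) := by
  classical
  induction s using Finset.induction_on with
  | empty => simp
  | insert j s hj ih =>
    obtain ⟨hpj, hps⟩ := forall_mem_insert .. |>.mp hp
    have hprod : (∏ i ∈ s, p i).totalDegree ≤ ∑ i ∈ s, n i :=
      (totalDegree_finsetProd _ _).trans (sum_le_sum hps)
    rw [sum_insert hj, prod_insert hj, prod_insert hj,
      homogeneousComponent_mul_of_totalDegree_le hpj hprod, ih hps]

end HomogeneousComponent

section ValueSet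

variable {σ R : Type*} [CommRing R] {f : MvPolynomial σ R} {k : ℕ}

lemma totalDegree_prod_sub_C_le (hf : f.totalDegree ≤ k) (S : Finset R) :
    (∏ y ∈ S, (f - C y)).totalDegree ≤ k * #S := by
  rw [mul_comm, ← smul_eq_mul, ← sum_const]
  exact (totalDegree_finsetProd _ _).trans
    (sum_le_sum fun y _ ↦ (totalDegree_sub_C_le f y).trans hf)

lemma homogeneousComponent_prod_sub_C (hk : 0 < k) (hf : f.totalDegree ≤ k) (S : Finset R) :
    homogeneousComponent (k * #S) (∏ y ∈ S, (f - C y)) = homogeneousComponent k f ^ #S := by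
  have hfactor (y : R) : homogeneousComponent k (f - C y) = homogeneousComponent k f := by
    rw [map_sub, homogeneousComponent_eq_zero k (C y) (by rwa [totalDegree_C]), sub_zero]
  have hprod := homogeneousComponent_prod_of_totalDegree_le S (n := fun _ ↦ k)
    fun y _ ↦ (totalDegree_sub_C_le f y).trans hf
  simpa only [sum_const, smul_eq_mul, mul_comm, hfactor, prod_const] using hprod

lemma exists_eval_notMem_of_coeff_homogeneousComponent_pow_ne_zero [Finite σ] [IsDomain R]
    (hk : 0 < k) (hf : f.totalDegree ≤ k) {S : Finset R} {d : σ →₀ ℕ} (hd : d.degree = k * #S)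
    (hcoeff : coeff d (homogeneousComponent k f ^ #S) ≠ 0)
    {A : σ → Finset R} (hA : ∀ i, d i < #(A i)) :
    ∃ x : σ → R, (∀ i, x i ∈ A i) ∧ eval x f ∉ S := by
  have htop : coeff d (∏ y ∈ S, (f - C y)) ≠ 0 := by
    rwa [← homogeneousComponent_prod_sub_C hk hf, coeff_homogeneousComponent, if_pos hd] at hcoeff
  have hdeg : (∏ y ∈ S, (f - C y)).totalDegree = d.degree :=
    ((totalDegree_prod_sub_C_le hf S).trans_eq hd.symm).antisymm
      (le_totalDegree (mem_support_iff.mpr htop))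
  obtain ⟨x, hxA, hx⟩ :=
    combinatorial_nullstellensatz_exists_eval_nonzero _ d htop hdeg A hA
  refine ⟨x, hxA, fun hxS ↦ hx ?_⟩
  rw [map_prod]
  exact prod_eq_zero hxS (by simp)

end ValueSet

section DiagonalForm

variable {σ R : Type*} [Fintype σ]

/-- The diagonal form `∑ i, a i * X i ^ k`, the leading part of the polynomials whose values are
counted. -/
noncomputable def diagonalForm [CommSemiring R] (k : ℕ) (a : σ → R) : MvPolynomial σ R :=
  ∑ i, C (a i) * X i ^ k

lemma isHomogeneous_diagonalForm [CommSemiring R] (k : ℕ) (a : σ → R) :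
    (diagonalForm k a).IsHomogeneous k :=
  IsHomogeneous.sum _ _ _ fun i _ ↦ isHomogeneous_C_mul_X_pow (a i) i k

lemma coeff_smul_diagonalForm_pow_degree [CommSemiring R] {k : ℕ} (hk : k ≠ 0) (a : σ → R)
    (m : σ →₀ ℕ) :
    coeff (k • m) (diagonalForm k a ^ m.degree) = m.multinomial * m.prod fun i e ↦ a i ^ e := by
  have hexpand : diagonalForm k a = expand k (∑ i, a i • X i) := by
    simp [diagonalForm, smul_eq_C_mul]
  rw [hexpand, ← map_pow, coeff_expand_smul k hk, coeff_linearCombination_X_pow_of_fintype]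
  exact if_pos rfl

lemma coeff_smul_diagonalForm_pow_degree_ne_zero [CommSemiring R] [IsDomain R] {k : ℕ}
    (hk : k ≠ 0) {a : σ → R} (ha : ∀ i, a i ≠ 0) {m : σ →₀ ℕ} (hm : (m.degree ! : R) ≠ 0) :
    coeff (k • m) (diagonalForm k a ^ m.degree) ≠ 0 := by
  rw [coeff_smul_diagonalForm_pow_degree hk]
  refine mul_ne_zero (fun hzero ↦ hm ?_) (prod_ne_zero_iff.mpr fun i _ ↦ pow_ne_zero _ (ha i))
  exact zero_dvd_iff.mp (hzero ▸ Nat.cast_dvd_cast (multinomial_dvd_factorial_degree m))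

lemma exists_eval_diagonalForm_add_notMem [CommRing R] [IsDomain R] {k : ℕ}
    {A : σ → Finset R} (hA : ∀ i, (A i).Nonempty) {a : σ → R} (ha : ∀ i, a i ≠ 0)
    {g : MvPolynomial σ R} (hg : g.totalDegree < k)
    {S : Finset R} (hfac : ((#S)! : R) ≠ 0) (hS : #S ≤ ∑ i, (#(A i) - 1) / k) :
    ∃ x : σ → R, (∀ i, x i ∈ A i) ∧ eval x (diagonalForm k a + g) ∉ S := by
  have hk : 0 < k := hg.pos
  have hhom := isHomogeneous_diagonalForm k a
  obtain ⟨m, hm, hmS⟩ := Finsupp.exists_le_degree_eq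
    (Finsupp.equivFunOnFinite.symm fun i ↦ (#(A i) - 1) / k) #S
    (by simpa [Finsupp.degree_eq_sum] using hS)
  have hdeg : (diagonalForm k a + g).totalDegree ≤ k :=
    (totalDegree_add _ _).trans (max_le hhom.totalDegree_le hg.le)
  have htop : homogeneousComponent k (diagonalForm k a + g) = diagonalForm k a := by
    rw [map_add, homogeneousComponent_eq_self hhom, homogeneousComponent_eq_zero k g hg, add_zero]
  refine exists_eval_notMem_of_coeff_homogeneousComponent_pow_ne_zero (d := k • m) hk hdeg
    (by rw [map_nsmul, hmS, smul_eq_mul]) ?_ fun i ↦ ?_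
  · rw [← hmS] at hfac
    rw [htop, ← hmS]
    exact coeff_smul_diagonalForm_pow_degree_ne_zero hk.ne' ha hfac
  · calc k * m i ≤ k * ((#(A i) - 1) / k) := Nat.mul_le_mul_left k (hm i)
      _ ≤ #(A i) - 1 := Nat.mul_div_le _ k
      _ < #(A i) := Nat.sub_one_lt (hA i).card_pos.ne'

end DiagonalForm

theorem stmt_9_general {σ R : Type*} [Fintype σ] [CommRing R] [IsDomain R] {k : ℕ}
    {A : σ → Finset R} (hA : ∀ i, (A i).Nonempty) {a : σ → R} (ha : ∀ i, a i ≠ 0)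
    {g : MvPolynomial σ R} (hg : g.totalDegree < k) :
    min (if ringChar R = 0 then (⊤ : ℕ∞) else (ringChar R : ℕ∞))
        ((1 + ∑ i, (#(A i) - 1) / k : ℕ)) ≤
      ({y : R | ∃ x : σ → R, (∀ i, x i ∈ A i) ∧
          eval x (diagonalForm k a + g) = y}.ncard : ℕ∞) := by
  set V := {y : R | ∃ x : σ → R, (∀ i, x i ∈ A i) ∧ eval x (diagonalForm k a + g) = y}
  have hV : V.Finite := (Set.Finite.pi' fun i ↦ (A i).finite_toSet).image _
  rw [Set.ncard_eq_toFinset_card V hV]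
  by_contra! hlt
  obtain ⟨hchar, hsum⟩ := lt_min_iff.mp hlt
  have hfac : ((#hV.toFinset)! : R) ≠ 0 := by
    rw [natCast_factorial_ne_zero_iff, or_iff_not_imp_left]
    intro h0
    simpa [h0] using hchar
  have hcard : #hV.toFinset ≤ ∑ i, (#(A i) - 1) / k := by
    have := Nat.cast_lt.mp hsum
    lia
  obtain ⟨x, hxA, hx⟩ := exists_eval_diagonalForm_add_notMem hA ha hg hfac hcard
  exact hx (hV.mem_toFinset.mpr ⟨x, hxA, rfl⟩)

theorem stmt_9 {F : Type*} [Field F] (n k : ℕ) (hk1 : 1 ≤ k)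
    (A : Fin n → Finset F) (hA : ∀ i, (A i).Nonempty)
    (a : Fin n → F) (ha : ∀ i, a i ≠ 0)
    (g f : MvPolynomial (Fin n) F)
    (hf : f = (∑ i : Fin n, C (a i) * (X i : MvPolynomial (Fin n) F) ^ k) + g)
    (hg : g.totalDegree < k) :
    min (if ringChar F = 0 then (⊤ : ℕ∞) else (ringChar F : ℕ∞))
        ((1 + ∑ i : Fin n, ((A i).card - 1) / k : ℕ)) ≤
      ({y : F | ∃ x : Fin n → F, (∀ i, x i ∈ A i) ∧
          MvPolynomial.eval x f = y}.ncard : ℕ∞) := by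
  subst hf
  exact stmt_9_general hA ha hg
end

section
/- Let A₁,…,Aₙ be finite subsets of a field F with |Aᵢ| ≥ i for i = 1,…,n, and let f(x₁,…,xₙ) = a₁x₁^k + ⋯ + aₙxₙ^k + g(x₁,…,xₙ) with a₁,…,aₙ ∈ F \ {0}, deg g < k, and k ≥ n. Then |{ f(x₁,…,xₙ) : xᵢ ∈ Aᵢ, xᵢ ≠ x_j for i ≠ j }| ≥ min{ p(F), 1 + Σ_{i=1}^n ⌊(|Aᵢ| − i)/k⌋ }. -/
open MvPolynomial

/-!
If the values of `f` at the admissible points all lay in a set `S` with `|S| < p(F)` and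
`|S| ≤ ∑ ⌊(|Aᵢ| - i) / k⌋`, then `∏_{c ∈ S} (f - c) * ∏_{i < j} (xⱼ - xᵢ)` would vanish on the grid
`A₁ × ⋯ × Aₙ`. Its top-degree part is that of `(∑ aᵢ xᵢ ^ k) ^ |S| * ∏_{i < j} (xⱼ - xᵢ)`.
All exponents of the first factor are divisible by `k`, while each term of the Vandermonde
determinant has exponents below `n ≤ k`; reducing exponents modulo `k` therefore separates these
terms, and the coefficient at `(k rᵢ + i - 1)ᵢ` is a multinomial coefficient times `∏ aᵢ ^ rᵢ`.
For `∑ rᵢ = |S|` this is nonzero, and `rᵢ ≤ ⌊(|Aᵢ| - i) / k⌋` keeps the exponents below `|Aᵢ|`,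
contradicting the Combinatorial Nullstellensatz.
-/

section TopCoefficient

variable {σ κ R : Type*} [CommRing R] {t : σ →₀ ℕ} {D : MvPolynomial σ R}

lemma coeff_mul_eq_coeff_mul_of_totalDegree_sub_lt {p q : MvPolynomial σ R}
    (h : (p - q).totalDegree + D.totalDegree < t.degree) :
    coeff t (p * D) = coeff t (q * D) := by
  rw [← sub_eq_zero, ← coeff_sub, ← sub_mul]
  exact coeff_eq_zero_of_totalDegree_lt ((totalDegree_mul _ _).trans_lt h)

lemma coeff_prod_mul_eq_coeff_pow_card_mul {k : ℕ} {s : Finset κ} {p : κ → MvPolynomial σ R}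
    {q : MvPolynomial σ R} (hq : q.totalDegree ≤ k)
    (hp : ∀ c ∈ s, (p c - q).totalDegree < k)
    (ht : k * s.card + D.totalDegree ≤ t.degree) :
    coeff t ((∏ c ∈ s, p c) * D) = coeff t (q ^ s.card * D) := by
  classical
  induction s using Finset.induction_on generalizing D with
  | empty => simp
  | insert c s hc ih =>
    rw [Finset.forall_mem_insert] at hp
    rw [Finset.card_insert_of_notMem hc, mul_add_one] at ht
    have hpc : (p c).totalDegree ≤ k := by
      rw [← sub_add_cancel (p c) q]
      exact (totalDegree_add _ _).trans (max_le hp.1.le hq)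
    have hpcD := totalDegree_mul (p c) D
    have hqD : (q ^ s.card * D).totalDegree ≤ k * s.card + D.totalDegree :=
      (totalDegree_mul _ _).trans <| by
        grw [totalDegree_pow, hq, mul_comm]
    calc coeff t ((∏ c ∈ insert c s, p c) * D)
        = coeff t ((∏ c ∈ s, p c) * (p c * D)) := by
          rw [Finset.prod_insert hc, mul_right_comm, mul_comm]
      _ = coeff t (q ^ s.card * (p c * D)) := ih hp.2 (by omega)
      _ = coeff t (p c * (q ^ s.card * D)) := by rw [mul_left_comm]
      _ = coeff t (q * (q ^ s.card * D)) :=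
          coeff_mul_eq_coeff_mul_of_totalDegree_sub_lt (by omega)
      _ = coeff t (q ^ (insert c s).card * D) := by
          rw [Finset.card_insert_of_notMem hc, pow_succ', mul_assoc]

/-- The polynomial method of Alon, Nathanson and Ruzsa. -/
theorem exists_eval_notMem_of_coeff_pow_card_mul_ne_zero [Finite σ] [IsDomain R] {k : ℕ}
    {q f : MvPolynomial σ R} (hq : q.totalDegree ≤ k) (hfq : (f - q).totalDegree < k)
    {S : Finset R} (ht : k * S.card + D.totalDegree ≤ t.degree) {A : σ → Finset R}
    (hA : ∀ i, t i < (A i).card) (hcoeff : coeff t (q ^ S.card * D) ≠ 0) :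
    ∃ x : σ → R, (∀ i, x i ∈ A i) ∧ eval x D ≠ 0 ∧ eval x f ∉ S := by
  have hfc : ∀ c ∈ S, (f - C c - q).totalDegree < k := fun c _ => by
    rw [sub_right_comm]
    exact (totalDegree_sub_C_le _ _).trans_lt hfq
  have hP : (∏ c ∈ S, (f - C c)).totalDegree ≤ k * S.card := by
    refine (totalDegree_finsetProd _ _).trans ?_
    rw [mul_comm]
    refine Finset.sum_le_card_nsmul _ _ _ fun c hc => ?_
    rw [← sub_add_cancel (f - C c) q]
    exact (totalDegree_add _ _).trans (max_le (hfc c hc).le hq)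
  rw [← coeff_prod_mul_eq_coeff_pow_card_mul hq hfc ht] at hcoeff
  have hdeg : ((∏ c ∈ S, (f - C c)) * D).totalDegree = t.degree :=
    ((totalDegree_mul _ _).trans ((Nat.add_le_add_right hP _).trans ht)).antisymm
      (le_totalDegree (mem_support_iff.2 hcoeff))
  obtain ⟨x, hxA, hx⟩ := combinatorial_nullstellensatz_exists_eval_nonzero _ t hcoeff hdeg A hA
  rw [map_mul, map_prod] at hx
  refine ⟨x, hxA, right_ne_zero_of_mul hx, fun hxS => left_ne_zero_of_mul hx ?_⟩
  exact Finset.prod_eq_zero hxS (by simp)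

end TopCoefficient

section Vandermonde

variable {n : ℕ} {R : Type*} [CommRing R]

/-- The exponent vector `(σ 0, …, σ (n - 1))` of the term of `∏_{i < j} (X j - X i)` indexed by
`σ`. -/
noncomputable def vandermondeExponent (σ : Equiv.Perm (Fin n)) : Fin n →₀ ℕ :=
  Finsupp.equivFunOnFinite.symm fun i => (σ i : ℕ)

@[simp]
lemma vandermondeExponent_apply (σ : Equiv.Perm (Fin n)) (i : Fin n) :
    vandermondeExponent σ i = σ i := rfl

lemma degree_vandermondeExponent (σ : Equiv.Perm (Fin n)) :
    (vandermondeExponent σ).degree = ∑ i : Fin n, (i : ℕ) := by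
  simp [Finsupp.degree_eq_sum, Equiv.sum_comp σ fun i : Fin n => (i : ℕ)]

lemma smul_add_vandermondeExponent_one_lt {k : ℕ} {r : Fin n →₀ ℕ} {m : Fin n → ℕ}
    (hm : ∀ i : Fin n, i.1 + 1 ≤ m i) (hr : ∀ i : Fin n, r i ≤ (m i - (i.1 + 1)) / k)
    (i : Fin n) : (k • r + vandermondeExponent 1 : Fin n →₀ ℕ) i < m i := by
  have hkr : k * r i ≤ m i - (i.1 + 1) :=
    (Nat.mul_le_mul_left k (hr i)).trans (Nat.mul_div_le _ k)
  have := hm i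
  simp only [Finsupp.add_apply, Finsupp.smul_apply, smul_eq_mul, vandermondeExponent_apply,
    Equiv.Perm.one_apply]
  omega

lemma det_vandermonde_X_eq_sum_monomial :
    (Matrix.vandermonde (X : Fin n → MvPolynomial (Fin n) R)).det =
      ∑ σ : Equiv.Perm (Fin n), monomial (vandermondeExponent σ) ((σ.sign : ℤ) : R) := by
  rw [← Matrix.det_transpose, Matrix.det_apply]
  refine Finset.sum_congr rfl fun σ _ => ?_
  rw [monomial_eq, Finsupp.prod_fintype _ _ (by simp)]
  simp [Matrix.vandermonde_apply, Units.smul_def, zsmul_eq_mul]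

lemma totalDegree_det_vandermonde_X_le :
    (Matrix.vandermonde (X : Fin n → MvPolynomial (Fin n) R)).det.totalDegree ≤
      ∑ i : Fin n, (i : ℕ) := by
  rw [det_vandermonde_X_eq_sum_monomial]
  refine totalDegree_finsetSum_le fun σ _ => (totalDegree_monomial_le _ _).trans ?_
  exact (degree_vandermondeExponent σ).le

lemma eq_of_vandermondeExponent_modEq {k : ℕ} (hnk : n ≤ k) {σ τ : Equiv.Perm (Fin n)}
    (h : ∀ i, vandermondeExponent σ i ≡ vandermondeExponent τ i [MOD k]) : σ = τ :=
  Equiv.ext fun i => Fin.ext <|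
    (h i).eq_of_lt_of_lt ((σ i).2.trans_le hnk) ((τ i).2.trans_le hnk)

theorem coeff_expand_mul_det_vandermonde_X {k : ℕ} (hnk : n ≤ k) (hk : k ≠ 0)
    (p : MvPolynomial (Fin n) R) (r : Fin n →₀ ℕ) :
    coeff (k • r + vandermondeExponent 1)
      (expand k p * (Matrix.vandermonde (X : Fin n → MvPolynomial (Fin n) R)).det) =
      coeff r p := by
  rw [det_vandermonde_X_eq_sum_monomial, Finset.mul_sum, coeff_sum,
    Finset.sum_eq_single_of_mem 1 (Finset.mem_univ _)]
  · simp [coeff_expand_smul k hk]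
  · intro σ _ hσ
    rw [coeff_mul_monomial']
    split_ifs with hle
    · obtain ⟨i, hi⟩ : ∃ i, ¬ vandermondeExponent σ i ≡ vandermondeExponent 1 i [MOD k] := by
        contrapose! hσ
        exact eq_of_vandermondeExponent_modEq hnk hσ
      rw [coeff_expand_of_not_dvd (i := i), zero_mul]
      rw [Finsupp.tsub_apply, ← Nat.modEq_iff_dvd' (hle i)]
      exact fun h => hi (h.trans (by simp [Nat.ModEq]))
    · rfl

lemma coeff_pow_mul_det_vandermonde_X {k : ℕ} (hnk : n ≤ k) (hk : k ≠ 0) (a : Fin n → R)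
    (r : Fin n →₀ ℕ) :
    coeff (k • r + vandermondeExponent 1)
      ((∑ i, C (a i) * X i ^ k) ^ r.degree *
        (Matrix.vandermonde (X : Fin n → MvPolynomial (Fin n) R)).det) =
      r.multinomial * ∏ i, a i ^ r i := by
  have hexpand : (∑ i, C (a i) * X i ^ k : MvPolynomial (Fin n) R) ^ r.degree =
      expand k ((∑ i, a i • X i) ^ r.degree) := by
    simp [smul_eq_C_mul]
  rw [hexpand, coeff_expand_mul_det_vandermonde_X hnk hk,
    coeff_linearCombination_X_pow_of_fintype, Finsupp.degree_apply, Finsupp.sum, if_pos rfl,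
    Finsupp.prod_fintype _ _ (by simp)]

end Vandermonde

section Cast

lemma natCast_factorial_ne_zero {R : Type*} [NonAssocSemiring R] [NoZeroDivisors R]
    [Nontrivial R] {N : ℕ} (h : ringChar R = 0 ∨ N < ringChar R) : (N.factorial : R) ≠ 0 := by
  rw [Ne, ringChar.spec]
  rcases CharP.char_is_prime_or_zero R (ringChar R) with hp | h0
  · rw [hp.dvd_factorial]
    have := hp.pos
    omega
  · rw [h0, zero_dvd_iff]
    exact N.factorial_ne_zero

lemma natCast_multinomial_ne_zero {ι R : Type*} [NonAssocSemiring R] (r : ι →₀ ℕ)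
    (h : (r.degree.factorial : R) ≠ 0) : (r.multinomial : R) ≠ 0 := by
  intro hr
  apply h
  rw [Finsupp.degree_apply, ← Nat.multinomial_spec, Nat.cast_mul, ← Finsupp.multinomial_eq, hr,
    mul_zero]

end Cast

section RestrictedValues

variable {n k : ℕ} {R : Type*} [CommRing R] [IsDomain R]

theorem exists_injective_eval_notMem_s10 (hnk : n ≤ k) {A : Fin n → Finset R}
    (hA : ∀ i : Fin n, i.1 + 1 ≤ (A i).card) {a : Fin n → R} (ha : ∀ i, a i ≠ 0)
    {g : MvPolynomial (Fin n) R} (hg : g.totalDegree < k) {S : Finset R}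
    (hS : S.card ≤ ∑ i : Fin n, ((A i).card - (i.1 + 1)) / k)
    (hfact : (S.card.factorial : R) ≠ 0) :
    ∃ x : Fin n → R, (∀ i, x i ∈ A i) ∧ Function.Injective x ∧
      eval x ((∑ i, C (a i) * X i ^ k) + g) ∉ S := by
  obtain ⟨r, hrq, hr⟩ := Finsupp.exists_le_degree_eq
    (Finsupp.equivFunOnFinite.symm fun i : Fin n => ((A i).card - (i.1 + 1)) / k) S.card
    (by simpa [Finsupp.degree_eq_sum] using hS)
  set D := (Matrix.vandermonde (X : Fin n → MvPolynomial (Fin n) R)).det with hD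
  have hL : (∑ i, C (a i) * X i ^ k : MvPolynomial (Fin n) R).totalDegree ≤ k :=
    totalDegree_finsetSum_le fun i _ => (totalDegree_mul _ _).trans (by simp)
  have hdeg : k * S.card + D.totalDegree ≤ (k • r + vandermondeExponent 1).degree := by
    rw [map_add, map_nsmul, hr, smul_eq_mul, degree_vandermondeExponent]
    exact Nat.add_le_add_left totalDegree_det_vandermonde_X_le _
  have hcoeff : coeff (k • r + vandermondeExponent 1)
      ((∑ i, C (a i) * X i ^ k) ^ S.card * D) ≠ 0 := by
    rw [← hr, coeff_pow_mul_det_vandermonde_X hnk (by omega)]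
    exact mul_ne_zero (natCast_multinomial_ne_zero r (hr ▸ hfact))
      (Finset.prod_ne_zero_iff.2 fun i _ => pow_ne_zero _ (ha i))
  obtain ⟨x, hxA, hxD, hxS⟩ := exists_eval_notMem_of_coeff_pow_card_mul_ne_zero hL
    (f := (∑ i, C (a i) * X i ^ k) + g) (by rwa [add_sub_cancel_left]) hdeg
    (smul_add_vandermondeExponent_one_lt hA hrq) hcoeff
  refine ⟨x, hxA, Matrix.det_vandermonde_ne_zero_iff.1 ?_, hxS⟩
  simpa [hD, Matrix.det_vandermonde] using hxD

theorem stmt_10_general (hnk : n ≤ k)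
    (A : Fin n → Finset R) (hA : ∀ i : Fin n, i.1 + 1 ≤ (A i).card)
    (a : Fin n → R) (ha : ∀ i, a i ≠ 0)
    (g f : MvPolynomial (Fin n) R)
    (hf : f = (∑ i : Fin n, C (a i) * (X i : MvPolynomial (Fin n) R) ^ k) + g)
    (hg : g.totalDegree < k) :
    min (if ringChar R = 0 then (⊤ : ℕ∞) else (ringChar R : ℕ∞))
        ((1 + ∑ i : Fin n, ((A i).card - (i.1 + 1)) / k : ℕ)) ≤
      ({y : R | ∃ x : Fin n → R, (∀ i, x i ∈ A i) ∧ Function.Injective x ∧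
          MvPolynomial.eval x f = y}.ncard : ℕ∞) := by
  set V := {y : R | ∃ x : Fin n → R, (∀ i, x i ∈ A i) ∧ Function.Injective x ∧ eval x f = y}
  have hV : V.Finite := ((Set.Finite.pi' fun i => (A i).finite_toSet).image (eval · f)).subset <| by
    rintro _ ⟨x, hxA, -, rfl⟩
    exact ⟨x, hxA, rfl⟩
  by_contra! hlt
  rw [lt_min_iff, Set.ncard_eq_toFinset_card V hV, Nat.cast_lt] at hlt
  have hchar : ringChar R = 0 ∨ hV.toFinset.card < ringChar R := by
    by_cases h0 : ringChar R = 0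
    · exact Or.inl h0
    · exact Or.inr (by simpa [h0] using hlt.1)
  obtain ⟨x, hxA, hx, hxV⟩ := exists_injective_eval_notMem_s10 hnk hA ha hg (S := hV.toFinset)
    (by omega) (natCast_factorial_ne_zero hchar)
  rw [← hf, hV.mem_toFinset] at hxV
  exact hxV ⟨x, hxA, hx, rfl⟩

end RestrictedValues

theorem stmt_10 {F : Type*} [Field F] (n k : ℕ) (hkn : n ≤ k)
    (A : Fin n → Finset F) (hA : ∀ i : Fin n, i.1 + 1 ≤ (A i).card)
    (a : Fin n → F) (ha : ∀ i, a i ≠ 0)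
    (g f : MvPolynomial (Fin n) F)
    (hf : f = (∑ i : Fin n, C (a i) * (X i : MvPolynomial (Fin n) F) ^ k) + g)
    (hg : g.totalDegree < k) :
    min (if ringChar F = 0 then (⊤ : ℕ∞) else (ringChar F : ℕ∞))
        ((1 + ∑ i : Fin n, ((A i).card - (i.1 + 1)) / k : ℕ)) ≤
      ({y : F | ∃ x : Fin n → F, (∀ i, x i ∈ A i) ∧ Function.Injective x ∧
          MvPolynomial.eval x f = y}.ncard : ℕ∞) :=
  stmt_10_general hkn A hA a ha g f hf hg
end
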